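/- arXiv:2305.10681 — 2 statements merged into one kernel-verified Lean document; each statement's English description precedes it below -/
import Mathlib

section
/- Let S be a measurable space (the state space), A a type (the action space), d : A × A → ℝ a nonnegative function with d(a, a) = 0 for all a ∈ A, π† : S → A a target policy, π : S → A a policy, and Δ ≥ 0 a real number. Let μ† and μ be probability measures on S (the state-visitation distributions of π† and π, respectively). Let R, R̂ : S × A → ℝ be reward functions satisfying |R̂(s, a) − R(s, a)| ≤ Δ · d(a, π†(s)) for all s ∈ S and a ∈ A. Assume s ↦ R(s, π†(s)) is μ†-integrable and that s ↦ R(s, π(s)) and s ↦ d(π(s), π†(s)) are μ-integrable. Then (∫ R̂(s, π†(s)) dμ†(s) − ∫ R̂(s, π(s)) dμ(s)) ≤ (∫ R(s, π†(s)) dμ†(s) − ∫ R(s, π(s)) dμ(s)) + Δ · ∫ d(π(s), π†(s)) dμ(s). -/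
/-!
Since `d` vanishes on the diagonal, the closeness hypothesis forces `Rhat` and `R` to coincide along
`πdag`, so the two target values are equal and only the values along `π` differ. There the pointwise
bound `|R - Rhat| ≤ Δ * d` also makes `Rhat` integrable, and integrates to the claim.
-/

open MeasureTheory

theorem norm_integral_sub_integral_le_of_norm_sub_le
    {α E : Type*} [MeasurableSpace α] {μ : Measure α} [NormedAddCommGroup E] [NormedSpace ℝ E]
    {f g : α → E} {b : α → ℝ} (hf : Integrable f μ) (hg : AEStronglyMeasurable g μ)
    (hb : Integrable b μ) (hfg : ∀ᵐ x ∂μ, ‖f x - g x‖ ≤ b x) :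
    ‖∫ x, f x ∂μ - ∫ x, g x ∂μ‖ ≤ ∫ x, b x ∂μ := by
  rw [← integral_sub hf (integrable_of_norm_sub_le hg hf hb hfg)]
  exact norm_integral_le_of_norm_le hb hfg

theorem reward_eq_along_target {S A : Type*} {d : A → A → ℝ} (hd0 : ∀ a, d a a = 0)
    {πdag : S → A} {Δ : ℝ} {R Rhat : S → A → ℝ}
    (hclose : ∀ s a, |Rhat s a - R s a| ≤ Δ * d a (πdag s)) (s : S) :
    Rhat s (πdag s) = R s (πdag s) := by
  have hzero : |Rhat s (πdag s) - R s (πdag s)| ≤ 0 := by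
    simpa only [hd0, mul_zero] using hclose s (πdag s)
  exact sub_eq_zero.mp (abs_nonpos_iff.mp hzero)

/-- The integrability conclusions ensure that the values of `Rhat` in the inequality are genuine
expectations rather than the junk value `0` of the Bochner integral. -/
theorem stmt_5_general
    {S : Type*} [MeasurableSpace S] {A : Type*} {d : A → A → ℝ} (hd0 : ∀ a, d a a = 0)
    {πdag π : S → A} {Δ : ℝ} {μdag μ : Measure S} {R Rhat : S → A → ℝ}
    (hclose : ∀ s a, |Rhat s a - R s a| ≤ Δ * d a (πdag s))
    (hRdagint : Integrable (fun s => R s (πdag s)) μdag)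
    (hRint : Integrable (fun s => R s (π s)) μ)
    (hdint : Integrable (fun s => d (π s) (πdag s)) μ)
    (hRhatmeas : AEStronglyMeasurable (fun s => Rhat s (π s)) μ) :
    Integrable (fun s => Rhat s (πdag s)) μdag ∧ Integrable (fun s => Rhat s (π s)) μ ∧
      (∫ s, Rhat s (πdag s) ∂μdag) - ∫ s, Rhat s (π s) ∂μ ≤
        ((∫ s, R s (πdag s) ∂μdag) - ∫ s, R s (π s) ∂μ)
          + Δ * ∫ s, d (π s) (πdag s) ∂μ := by
  have hbound : ∀ᵐ s ∂μ, ‖R s (π s) - Rhat s (π s)‖ ≤ Δ * d (π s) (πdag s) :=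
    .of_forall fun s => by simpa only [Real.norm_eq_abs, abs_sub_comm] using hclose s (π s)
  have hΔdint : Integrable (fun s => Δ * d (π s) (πdag s)) μ := hdint.const_mul Δ
  simp only [reward_eq_along_target hd0 hclose]
  refine ⟨hRdagint, integrable_of_norm_sub_le hRhatmeas hRint hΔdint hbound, ?_⟩
  have hvalue : ∫ s, R s (π s) ∂μ - ∫ s, Rhat s (π s) ∂μ ≤ Δ * ∫ s, d (π s) (πdag s) ∂μ :=
    calc ∫ s, R s (π s) ∂μ - ∫ s, Rhat s (π s) ∂μ
      _ ≤ ‖∫ s, R s (π s) ∂μ - ∫ s, Rhat s (π s) ∂μ‖ := Real.le_norm_self _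
      _ ≤ ∫ s, Δ * d (π s) (πdag s) ∂μ :=
        norm_integral_sub_integral_le_of_norm_sub_le hRint hRhatmeas hΔdint hbound
      _ = Δ * ∫ s, d (π s) (πdag s) ∂μ := integral_const_mul Δ _
  linarith

/-- Policy-value gap inequality from the proof of Theorem 2: the adversarial gap
V^{π†}_{R̂} − V^π_{R̂} is bounded by the true gap plus Δ · E_{s∼μ}[d(π(s), π†(s))]. -/
theorem stmt_5
    {S : Type*} [MeasurableSpace S] {A : Type*}
    (d : A → A → ℝ) (hd : ∀ a b, 0 ≤ d a b) (hd0 : ∀ a, d a a = 0)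
    (πdag π : S → A) (Δ : ℝ) (hΔ : 0 ≤ Δ)
    (μdag μ : Measure S) [IsProbabilityMeasure μdag] [IsProbabilityMeasure μ]
    (R Rhat : S → A → ℝ)
    (hclose : ∀ s a, |Rhat s a - R s a| ≤ Δ * d a (πdag s))
    (hRdagint : Integrable (fun s => R s (πdag s)) μdag)
    (hRint : Integrable (fun s => R s (π s)) μ)
    (hdint : Integrable (fun s => d (π s) (πdag s)) μ)
    (hRhatmeas : Measurable fun s => Rhat s (π s)) :
    (∫ s, Rhat s (πdag s) ∂μdag) - ∫ s, Rhat s (π s) ∂μ ≤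
      ((∫ s, R s (πdag s) ∂μdag) - ∫ s, R s (π s) ∂μ)
        + Δ * ∫ s, d (π s) (πdag s) ∂μ :=
  (stmt_5_general hd0 hclose hRdagint hRint hdint hRhatmeas.aestronglyMeasurable).2.2
end

section
/- Let S be a measurable space (the state space), A a type (the action space), d : A × A → ℝ a nonnegative function with d(a, a) = 0 for all a ∈ A, π† : S → A a target policy, π : S → A a policy, and Δ ≥ 0 a real number. Let μ† and μ be probability measures on S (the state-visitation distributions of π† and π, respectively). Let R : S × A → ℝ be a reward function and define the adaptive adversarial reward R̂_ad(s, a) := R(s, a) − Δ · d(a, π†(s)). Assume s ↦ R(s, π†(s)) is μ†-integrable and that s ↦ R(s, π(s)) and s ↦ d(π(s), π†(s)) are μ-integrable. Then for every reward function R̂ : S × A → ℝ satisfying |R̂(s, a) − R(s, a)| ≤ Δ · d(a, π†(s)) for all s ∈ S, a ∈ A, one has (∫ R̂(s, π†(s)) dμ†(s) − ∫ R̂(s, π(s)) dμ(s)) ≤ (∫ R̂_ad(s, π†(s)) dμ†(s) − ∫ R̂_ad(s, π(s)) dμ(s)). -/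
/-!
The perturbation budget vanishes on the target actions, so every admissible reward gives the target
policy the same value. On any other policy the reward "original minus budget" is the pointwise
smallest admissible one, hence gives that policy the least value.
-/

open MeasureTheory

section PolicyValue

variable {S A : Type*}

/-- The value `V^π_R = E_{s ∼ μ}[R (s, π s)]` of a policy `π`. The visitation measure `μ` of `π` is
an independent argument, and need not be normalized, so that unnormalized occupancy measures are
covered. -/
noncomputable def policyValue [MeasurableSpace S] (μ : Measure S) (R : S → A → ℝ) (π : S → A) : ℝ :=
  ∫ s, R s (π s) ∂μ

/-- `Rhat` is a reward that an adversary may substitute for `R` when the perturbation at each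
state-action pair is limited by `budget`. The third condition of an efficient adversarial MDP is
the case `budget s a = Δ * d a (πdag s)`. -/
def IsAdmissibleReward (budget R Rhat : S → A → ℝ) : Prop :=
  ∀ s a, |Rhat s a - R s a| ≤ budget s a

variable {budget R Rhat : S → A → ℝ}

lemma IsAdmissibleReward.sub_budget_le (h : IsAdmissibleReward budget R Rhat) :
    R - budget ≤ Rhat := fun s a =>
  sub_le_of_abs_sub_le_left (h s a)

lemma IsAdmissibleReward.sub_budget (h : IsAdmissibleReward budget R Rhat) :
    IsAdmissibleReward budget R (R - budget) := fun s a => by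
  have budget_nonneg : 0 ≤ budget s a := (abs_nonneg _).trans (h s a)
  simp only [Pi.sub_apply, sub_sub_cancel_left, abs_neg, abs_of_nonneg budget_nonneg, le_refl]

lemma IsAdmissibleReward.eq_of_budget_eq_zero (h : IsAdmissibleReward budget R Rhat)
    {s : S} {a : A} (h0 : budget s a = 0) : Rhat s a = R s a :=
  eq_of_abs_sub_nonpos ((h s a).trans_eq h0)

variable [MeasurableSpace S] {μ : Measure S} {π : S → A}

lemma IsAdmissibleReward.policyValue_eq (h : IsAdmissibleReward budget R Rhat)
    (h0 : ∀ s, budget s (π s) = 0) : policyValue μ Rhat π = policyValue μ R π :=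
  integral_congr_ae (.of_forall fun s => h.eq_of_budget_eq_zero (h0 s))

lemma IsAdmissibleReward.integrable (h : IsAdmissibleReward budget R Rhat)
    (hmeas : AEStronglyMeasurable (fun s => Rhat s (π s)) μ)
    (hR : Integrable (fun s => R s (π s)) μ) (hbudget : Integrable (fun s => budget s (π s)) μ) :
    Integrable (fun s => Rhat s (π s)) μ :=
  integrable_of_norm_sub_le hmeas hR hbudget
    (.of_forall fun s => (norm_sub_rev _ _).trans_le (h s (π s)))

lemma IsAdmissibleReward.policyValue_sub_budget_le (h : IsAdmissibleReward budget R Rhat)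
    (hmeas : AEStronglyMeasurable (fun s => Rhat s (π s)) μ)
    (hR : Integrable (fun s => R s (π s)) μ) (hbudget : Integrable (fun s => budget s (π s)) μ) :
    policyValue μ (R - budget) π ≤ policyValue μ Rhat π :=
  integral_mono (hR.sub hbudget) (h.integrable hmeas hR hbudget)
    fun s => h.sub_budget_le s (π s)

theorem stmt_6_general {μdag : Measure S} {πdag : S → A}
    (h : IsAdmissibleReward budget R Rhat) (h0 : ∀ s, budget s (πdag s) = 0)
    (_hRdag : Integrable (fun s => R s (πdag s)) μdag)
    (hR : Integrable (fun s => R s (π s)) μ) (hbudget : Integrable (fun s => budget s (π s)) μ)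
    (hmeas : AEStronglyMeasurable (fun s => Rhat s (π s)) μ) :
    policyValue μdag Rhat πdag - policyValue μ Rhat π ≤
      policyValue μdag (R - budget) πdag - policyValue μ (R - budget) π := by
  rw [h.policyValue_eq h0, h.sub_budget.policyValue_eq h0]
  exact sub_le_sub_left (h.policyValue_sub_budget_le hmeas hR hbudget) _

end PolicyValue

/-- Theorem 2 (optimality of the adaptive target attack): among all adversarial rewards
R̂ with |R̂(s,a) − R(s,a)| ≤ Δ·d(a,π†(s)), the adaptive reward
R̂_ad(s,a) = R(s,a) − Δ·d(a,π†(s)) maximizes the policy-value gap V^{π†}_{R̂} − V^π_{R̂}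
for every policy π. -/
theorem stmt_6
    {S : Type*} [MeasurableSpace S] {A : Type*}
    (d : A → A → ℝ) (hd : ∀ a b, 0 ≤ d a b) (hd0 : ∀ a, d a a = 0)
    (πdag π : S → A) (Δ : ℝ) (hΔ : 0 ≤ Δ)
    (μdag μ : Measure S) [IsProbabilityMeasure μdag] [IsProbabilityMeasure μ]
    (R : S → A → ℝ)
    (RhatAd : S → A → ℝ) (hAd : ∀ s a, RhatAd s a = R s a - Δ * d a (πdag s))
    (hRdagint : Integrable (fun s => R s (πdag s)) μdag)
    (hRint : Integrable (fun s => R s (π s)) μ)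
    (hdint : Integrable (fun s => d (π s) (πdag s)) μ) :
    ∀ Rhat : S → A → ℝ,
      (∀ s a, |Rhat s a - R s a| ≤ Δ * d a (πdag s)) →
      (Measurable fun s => Rhat s (π s)) →
      (∫ s, Rhat s (πdag s) ∂μdag) - ∫ s, Rhat s (π s) ∂μ ≤
        (∫ s, RhatAd s (πdag s) ∂μdag) - ∫ s, RhatAd s (π s) ∂μ := by
  intro Rhat hRhat hmeas
  obtain rfl : RhatAd = R - fun s a => Δ * d a (πdag s) := funext₂ hAd
  exact stmt_6_general hRhat (fun s => by rw [hd0, mul_zero]) hRdagint hRint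
    (hdint.const_mul Δ) hmeas.aestronglyMeasurable
end
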